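/- arXiv:1211.4246 — 2 statements merged into one kernel-verified Lean document; each statement's English description precedes it below -/
import Mathlib

section
/- Let p : ℝ^d → ℝ be a three times continuously differentiable probability density function and let x₀ ∈ ℝ^d. Then the local mass satisfies Z_δ(x₀) = δ^d · (π^{d/2}/Γ(1 + d/2)) · ( p(x₀) + δ² · trace(H(x₀)) / (2(d+2)) ) + o(δ^{d+3}) as δ → 0⁺, where H(x₀) is the Hessian matrix of p at x₀ and Γ is the Gamma function. -/
/-!
Symmetrizing over `h ↦ -h` gives `2 Z_δ = ∫_{‖h‖ < δ} (p (x₀ + h) + p (x₀ - h)) dh`, and the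
integrand is `2 p x₀ + D²p(x₀)(h, h) + o(‖h‖³)`: its odd Taylor terms cancel
(`symm_remainder_isLittleO`, obtained by integrating twice, with `isLittleO_pow_succ_of_fderiv`,
the first-order expansion of `D²p` at `x₀`). The remainder contributes
`o(δ³) · vol(B_δ) = o(δ^(d+3))`. By the isometry invariance of the ball,
`∫ h_i h_j` vanishes off the diagonal and is independent of `i` on it, so that
the quadratic term only sees the trace (`setIntegral_ball_bilin`); the common diagonal value
is `1/d` times the radial integral `∫ ‖h‖²`, computed in polar coordinates.
-/


open MeasureTheory Real Filter Topology Asymptotics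

/-- Integrated form of an asymptotic bound: a derivative that is `o(‖h‖ⁿ)` at the origin comes
from a function that is `o(‖h‖ⁿ⁺¹)`, by the mean value inequality on balls. -/
lemma isLittleO_pow_succ_of_fderiv {E F : Type*} [NormedAddCommGroup E] [NormedSpace ℝ E]
    [NormedAddCommGroup F] [NormedSpace ℝ F] {f : E → F} (hf : Differentiable ℝ f)
    (h0 : f 0 = 0) (n : ℕ) (h : fderiv ℝ f =o[𝓝 0] fun x => ‖x‖ ^ n) :
    f =o[𝓝 0] fun x => ‖x‖ ^ (n + 1) := by
  rw [isLittleO_iff] at h ⊢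
  intro c hc
  obtain ⟨r, hr, H⟩ := Metric.eventually_nhds_iff_ball.1 (h hc)
  filter_upwards [Metric.ball_mem_nhds (0 : E) hr] with x hx
  have hxr : ‖x‖ < r := by simpa using hx
  have key := Convex.norm_image_sub_le_of_norm_fderiv_le (𝕜 := ℝ) (f := f) (C := c * ‖x‖ ^ n)
    (s := Metric.closedBall 0 ‖x‖) (x := 0) (y := x) (fun y _ => hf y)
    (fun y hy => by
      have hy' : ‖y‖ ≤ ‖x‖ := by simpa using hy
      have := H y (by simpa using hy'.trans_lt hxr)
      rw [norm_pow, norm_norm] at this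
      exact this.trans (by gcongr))
    (convex_closedBall _ _) (by simp) (by simp)
  rw [h0, sub_zero, sub_zero] at key
  rw [norm_pow, norm_norm, pow_succ, ← mul_assoc]
  exact key

/-- The first-order terms of `f` at `x₀ + h` and `x₀ - h` cancel. -/
lemma symm_sub_isLittleO {E F : Type*} [NormedAddCommGroup E] [NormedSpace ℝ E]
    [NormedAddCommGroup F] [NormedSpace ℝ F] {f : E → F} {x₀ : E}
    (hf : DifferentiableAt ℝ f x₀) :
    (fun h => f (x₀ + h) + f (x₀ - h) - (2 : ℝ) • f x₀) =o[𝓝 0] fun h => ‖h‖ ^ 1 := by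
  have h1 := hasFDerivAt_iff_isLittleO_nhds_zero.1 hf.hasFDerivAt
  have hn : Tendsto (fun h : E => -h) (𝓝 0) (𝓝 0) := by
    simpa using (continuous_neg (G := E)).tendsto 0
  have h2 := (h1.comp_tendsto hn).norm_right
  simp only [Function.comp_def, norm_neg] at h2
  simp only [pow_one]
  refine (h1.norm_right.add h2).congr_left fun h => ?_
  rw [map_neg, ← sub_eq_add_neg, two_smul]
  abel

lemma symm_remainder_isLittleO {E : Type*} [NormedAddCommGroup E] [NormedSpace ℝ E]
    {p : E → ℝ} (hp : ContDiff ℝ 3 p) (x₀ : E) :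
    (fun h => p (x₀ + h) + p (x₀ - h) - 2 * p x₀ - fderiv ℝ (fderiv ℝ p) x₀ h h)
      =o[𝓝 0] fun h => ‖h‖ ^ 3 := by
  have hd1 : Differentiable ℝ p := hp.differentiable (by norm_num)
  have hp2 : ContDiff ℝ 2 (fderiv ℝ p) := hp.fderiv_right (by norm_num)
  have hd2 : Differentiable ℝ (fderiv ℝ p) := hp2.differentiable (by norm_num)
  have hp3 : ContDiff ℝ 1 (fderiv ℝ (fderiv ℝ p)) := hp2.fderiv_right (by norm_num)
  have hd3 : Differentiable ℝ (fderiv ℝ (fderiv ℝ p)) := hp3.differentiable (by norm_num)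
  have hsymm : IsSymmSndFDerivAt ℝ p x₀ :=
    hp.contDiffAt.isSymmSndFDerivAt (by simp; norm_num)
  set B := fderiv ℝ (fderiv ℝ p) x₀ with hB
  have hadd : ∀ h : E, HasFDerivAt (fun h => x₀ + h) (ContinuousLinearMap.id ℝ E) h :=
    fun h => (hasFDerivAt_id h).const_add x₀
  have hsub : ∀ h : E, HasFDerivAt (fun h => x₀ - h) (-ContinuousLinearMap.id ℝ E) h :=
    fun h => (hasFDerivAt_id h).const_sub x₀
  have e1 : ∀ h, HasFDerivAt (fun h => p (x₀ + h) + p (x₀ - h) - 2 * p x₀ - B h h)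
      (fderiv ℝ p (x₀ + h) - fderiv ℝ p (x₀ - h) - (2 : ℝ) • B h) h := by
    intro h
    have a1 := (hd1 (x₀ + h)).hasFDerivAt.comp h (hadd h)
    have a2 := (hd1 (x₀ - h)).hasFDerivAt.comp h (hsub h)
    have a3 := (B.hasFDerivAt (x := h)).clm_apply (hasFDerivAt_id h)
    refine (((a1.add a2).sub_const (2 * p x₀)).sub a3).congr_fderiv ?_
    ext v
    have := hsymm.eq v h
    simp [← hB] at this ⊢
    rw [this]; ring
  have e2 : ∀ h, HasFDerivAt
      (fun h => fderiv ℝ p (x₀ + h) - fderiv ℝ p (x₀ - h) - (2 : ℝ) • B h)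
      (fderiv ℝ (fderiv ℝ p) (x₀ + h) + fderiv ℝ (fderiv ℝ p) (x₀ - h) - (2 : ℝ) • B) h := by
    intro h
    have a1 := (hd2 (x₀ + h)).hasFDerivAt.comp h (hadd h)
    have a2 := (hd2 (x₀ - h)).hasFDerivAt.comp h (hsub h)
    have a3 := (B.hasFDerivAt (x := h)).const_smul (2 : ℝ)
    refine ((a1.sub a2).sub a3).congr_fderiv ?_
    ext v w
    simp
  have o1 : (fun h => fderiv ℝ (fderiv ℝ p) (x₀ + h)
      + fderiv ℝ (fderiv ℝ p) (x₀ - h) - (2 : ℝ) • B) =o[𝓝 0] fun h : E => ‖h‖ ^ 1 :=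
    symm_sub_isLittleO (F := E →L[ℝ] E →L[ℝ] ℝ) (f := fderiv ℝ (fderiv ℝ p)) (hd3 x₀)
  have f2 := funext fun h => (e2 h).fderiv
  have f1 := funext fun h => (e1 h).fderiv
  have o2 := isLittleO_pow_succ_of_fderiv (fun h => (e2 h).differentiableAt) (by simp) 1
    (by rw [f2]; exact o1)
  exact isLittleO_pow_succ_of_fderiv (fun h => (e1 h).differentiableAt) (by simp; ring) 2
    (by rw [f1]; exact o2)

lemma volume_real_ball_euclidean (d : ℕ) (x : EuclideanSpace ℝ (Fin d)) {r : ℝ} (hr : 0 < r) :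
    volume.real (Metric.ball x r) = r ^ d * (π ^ ((d : ℝ) / 2) / Real.Gamma (1 + d / 2)) := by
  rcases Nat.eq_zero_or_pos d with rfl | hd
  · have hb : Metric.ball x r = Set.univ := by
      ext y; simp [Subsingleton.elim y x, hr]
    have := (EuclideanSpace.volume_preserving_symm_measurableEquiv_toLp (Fin 0)).measure_preimage
      MeasurableSet.univ.nullMeasurableSet
    rw [Set.preimage_univ] at this
    rw [hb, measureReal_def, this]
    simp [volume_pi]
  · have : Nonempty (Fin d) := ⟨⟨0, hd⟩⟩
    have hs : √π ^ d = π ^ ((d : ℝ) / 2) := by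
      rw [Real.sqrt_eq_rpow, ← Real.rpow_natCast, ← Real.rpow_mul pi_pos.le]
      congr 1; ring
    have hG : 0 < Real.Gamma ((d : ℝ) / 2 + 1) := Real.Gamma_pos_of_pos (by positivity)
    rw [measureReal_def, EuclideanSpace.volume_ball, Fintype.card_fin, ENNReal.toReal_mul,
      ENNReal.toReal_pow, ENNReal.toReal_ofReal hr.le, ENNReal.toReal_ofReal (by positivity), hs,
      add_comm (1 : ℝ)]

lemma setIntegral_ball_comp_isometry {d : ℕ}
    (L : EuclideanSpace ℝ (Fin d) ≃ₗᵢ[ℝ] EuclideanSpace ℝ (Fin d))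
    (f : EuclideanSpace ℝ (Fin d) → ℝ) (r : ℝ) :
    ∫ h in Metric.ball 0 r, f (L h) = ∫ h in Metric.ball 0 r, f h := by
  have := L.measurePreserving.setIntegral_preimage_emb L.toMeasurableEquiv.measurableEmbedding f
    (Metric.ball 0 r)
  rwa [LinearIsometryEquiv.preimage_ball, map_zero] at this

lemma setIntegral_ball_norm_sq (d : ℕ) (hd : 0 < d) {r : ℝ} (hr : 0 < r) :
    ∫ h in Metric.ball (0 : EuclideanSpace ℝ (Fin d)) r, ‖h‖ ^ 2
      = d * (π ^ ((d : ℝ) / 2) / Real.Gamma (1 + d / 2)) * (r ^ (d + 2) / (d + 2)) := by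
  have : Nonempty (Fin d) := ⟨⟨0, hd⟩⟩
  have h1 := integral_fun_norm_addHaar (volume : Measure (EuclideanSpace ℝ (Fin d)))
    ((Set.Iio r).indicator fun t : ℝ => t ^ 2)
  have h2 : (fun h : EuclideanSpace ℝ (Fin d) => (Set.Iio r).indicator (fun t : ℝ => t ^ 2) ‖h‖)
      = (Metric.ball 0 r).indicator fun h => ‖h‖ ^ 2 := by
    ext h
    by_cases hh : ‖h‖ < r <;> simp [hh]
  have h3 : (fun y : ℝ => y ^ (d - 1) • (Set.Iio r).indicator (fun t : ℝ => t ^ 2) y)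
      = (Set.Iio r).indicator fun y => y ^ (d + 1) := by
    ext y
    by_cases hy : y < r
    · simp [hy, ← pow_add, show d - 1 + 2 = d + 1 by omega]
    · simp [hy]
  rw [h2, integral_indicator measurableSet_ball, finrank_euclideanSpace_fin, h3,
    setIntegral_indicator measurableSet_Iio, Set.Ioi_inter_Iio, ← integral_Ioc_eq_integral_Ioo,
    ← intervalIntegral.integral_of_le hr.le, integral_pow,
    volume_real_ball_euclidean d 0 one_pos] at h1
  rw [h1]
  simp
  ring

lemma integrableOn_ball_of_continuous {d : ℕ} {f : EuclideanSpace ℝ (Fin d) → ℝ}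
    (hf : Continuous f) (r : ℝ) : IntegrableOn f (Metric.ball 0 r) :=
  (hf.continuousOn.integrableOn_compact (isCompact_closedBall 0 r)).mono_set
    Metric.ball_subset_closedBall

/-- Second moments of a centred ball; the off-diagonal ones vanish by reflecting one coordinate,
the diagonal ones agree by permuting coordinates. -/
lemma setIntegral_ball_coord_mul (d : ℕ) {r : ℝ} (hr : 0 < r) (i j : Fin d) :
    ∫ h in Metric.ball (0 : EuclideanSpace ℝ (Fin d)) r, h i * h j
      = if i = j then
        (π ^ ((d : ℝ) / 2) / Real.Gamma (1 + d / 2)) * (r ^ (d + 2) / (d + 2)) else 0 := by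
  split_ifs with hij
  · subst hij
    have hd : 0 < d := i.pos
    have hsame : ∀ k : Fin d, ∫ h in Metric.ball (0 : EuclideanSpace ℝ (Fin d)) r, h k * h k
        = ∫ h in Metric.ball (0 : EuclideanSpace ℝ (Fin d)) r, h i * h i := by
      intro k
      rw [← setIntegral_ball_comp_isometry
        (LinearIsometryEquiv.piLpCongrLeft 2 ℝ ℝ (Equiv.swap i k)) (fun h => h i * h i)]
      simp [LinearIsometryEquiv.piLpCongrLeft_apply, Equiv.piCongrLeft']
    have hsum := setIntegral_ball_norm_sq d hd hr
    simp_rw [EuclideanSpace.real_norm_sq_eq, sq] at hsum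
    rw [integral_finsetSum _ fun k _ => integrableOn_ball_of_continuous (by fun_prop) r,
      Finset.sum_congr rfl fun k _ => hsame k] at hsum
    simp only [Finset.sum_const, Finset.card_univ, Fintype.card_fin, nsmul_eq_mul] at hsum
    have : (d : ℝ) ≠ 0 := by positivity
    apply mul_left_cancel₀ this
    rw [hsum, mul_assoc]
  · have := setIntegral_ball_comp_isometry (d := d)
      (LinearIsometryEquiv.piLpCongrRight 2
        fun k => if k = i then LinearIsometryEquiv.neg ℝ else LinearIsometryEquiv.refl ℝ ℝ)
      (fun h => h i * h j) r
    simp [LinearIsometryEquiv.piLpCongrRight_apply, Ne.symm hij, integral_neg] at this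
    linarith

lemma setIntegral_ball_bilin (d : ℕ) {r : ℝ} (hr : 0 < r)
    (B : EuclideanSpace ℝ (Fin d) →L[ℝ] EuclideanSpace ℝ (Fin d) →L[ℝ] ℝ) :
    ∫ h in Metric.ball (0 : EuclideanSpace ℝ (Fin d)) r, B h h
      = (∑ i, B (EuclideanSpace.single i 1) (EuclideanSpace.single i 1)) *
        ((π ^ ((d : ℝ) / 2) / Real.Gamma (1 + d / 2)) * (r ^ (d + 2) / (d + 2))) := by
  have hexp : ∀ h : EuclideanSpace ℝ (Fin d), B h h = ∑ i, ∑ j,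
      B (EuclideanSpace.single i 1) (EuclideanSpace.single j 1) * (h i * h j) := by
    intro h
    have hh : h = ∑ i, h i • EuclideanSpace.single i (1 : ℝ) := by
      simpa using ((EuclideanSpace.basisFun (Fin d) ℝ).sum_repr h).symm
    conv_lhs => rw [hh]
    simp only [map_sum, map_smul, _root_.sum_apply, _root_.smul_apply,
      smul_eq_mul, Finset.mul_sum]
    rw [Finset.sum_comm]
    refine Finset.sum_congr rfl fun i _ => Finset.sum_congr rfl fun j _ => ?_
    ring
  simp_rw [hexp]
  rw [integral_finsetSum _ fun k _ => integrableOn_ball_of_continuous (by fun_prop) r,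
    Finset.sum_mul]
  refine Finset.sum_congr rfl fun i _ => ?_
  rw [integral_finsetSum _ fun k _ => integrableOn_ball_of_continuous (by fun_prop) r]
  simp_rw [integral_const_mul, setIntegral_ball_coord_mul d hr]
  simp

/-- For a three times continuously differentiable probability density `p`
on `ℝ^d` and `x₀ ∈ ℝ^d`, the local mass `Z_δ(x₀) = ∫_{B_δ(x₀)} p` satisfies
`Z_δ(x₀) = δ^d (π^{d/2}/Γ(1+d/2)) (p(x₀) + δ² tr(H(x₀))/(2(d+2))) + o(δ^{d+3})`
as `δ → 0⁺`, where `H(x₀)` is the Hessian of `p` at `x₀` (its trace being the sum of the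
second partial derivatives). -/
theorem local_mass_asymptotics
    (d : ℕ) (p : EuclideanSpace ℝ (Fin d) → ℝ)
    (hp_smooth : ContDiff ℝ 3 p)
    (hp_nonneg : ∀ x, 0 ≤ p x)
    (hp_int : ∫ x, p x = 1)
    (x₀ : EuclideanSpace ℝ (Fin d))
    (Z : ℝ → ℝ) (hZ : ∀ δ, Z δ = ∫ x in Metric.ball x₀ δ, p x)
    (traceH : ℝ)
    (htraceH : traceH = ∑ i : Fin d,
        fderiv ℝ (fun y => fderiv ℝ p y (EuclideanSpace.single i 1)) x₀
          (EuclideanSpace.single i 1)) :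
    (fun δ => Z δ - δ ^ d * (π ^ ((d : ℝ) / 2) / Real.Gamma (1 + d / 2)) *
        (p x₀ + δ ^ 2 * traceH / (2 * (d + 2))))
      =o[𝓝[>] (0:ℝ)] fun δ => δ ^ (d + 3) := by
  set c : ℝ := π ^ ((d : ℝ) / 2) / Real.Gamma (1 + d / 2) with hc
  set B := fderiv ℝ (fderiv ℝ p) x₀ with hB
  have hpc : Continuous p := hp_smooth.continuous
  have hd2 : Differentiable ℝ (fderiv ℝ p) :=
    (hp_smooth.fderiv_right (m := 2) (by norm_num)).differentiable (by norm_num)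
  have htr : traceH = ∑ i, B (EuclideanSpace.single i 1) (EuclideanSpace.single i 1) := by
    rw [htraceH]
    refine Finset.sum_congr rfl fun i _ => ?_
    rw [fderiv_clm_apply (hd2 x₀) (differentiableAt_const _)]
    simp [hB]
  set q : EuclideanSpace ℝ (Fin d) → ℝ :=
    fun h => p (x₀ + h) + p (x₀ - h) - 2 * p x₀ - B h h with hq
  have hqo : q =o[𝓝 0] fun h => ‖h‖ ^ 3 := symm_remainder_isLittleO hp_smooth x₀
  have hqc : Continuous q := by fun_prop
  have hZ1 : ∀ δ, Z δ = ∫ h in Metric.ball 0 δ, p (x₀ + h) := by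
    intro δ
    have := (measurePreserving_add_left volume x₀).setIntegral_preimage_emb
      (measurableEmbedding_addLeft x₀) p (Metric.ball x₀ δ)
    rw [hZ, ← this, preimage_add_ball, sub_self]
  have hZ2 : ∀ δ, Z δ = ∫ h in Metric.ball 0 δ, p (x₀ - h) := by
    intro δ
    rw [hZ1, ← setIntegral_ball_comp_isometry (LinearIsometryEquiv.neg ℝ)]
    simp [sub_eq_add_neg]
  have key : ∀ δ, 0 < δ → Z δ - δ ^ d * c * (p x₀ + δ ^ 2 * traceH / (2 * (d + 2)))
      = (∫ h in Metric.ball 0 δ, q h) / 2 := by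
    intro δ hδ
    have i1 : IntegrableOn (fun h => p (x₀ + h)) (Metric.ball 0 δ) :=
      integrableOn_ball_of_continuous (by fun_prop) δ
    have i2 : IntegrableOn (fun h => p (x₀ - h)) (Metric.ball 0 δ) :=
      integrableOn_ball_of_continuous (by fun_prop) δ
    have i3 : IntegrableOn (fun _ : EuclideanSpace ℝ (Fin d) => 2 * p x₀) (Metric.ball 0 δ) :=
      integrableOn_ball_of_continuous (by fun_prop) δ
    have i4 : IntegrableOn (fun h => B h h) (Metric.ball 0 δ) :=
      integrableOn_ball_of_continuous (by fun_prop) δ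
    have hI : ∫ h in Metric.ball 0 δ, q h = Z δ + Z δ - δ ^ d * c * (2 * p x₀)
        - traceH * (c * (δ ^ (d + 2) / (d + 2))) := by
      have e1 := integral_sub ((i1.add i2).sub i3) i4
      have e2 := integral_sub (i1.add i2) i3
      simp only [Pi.add_apply, Pi.sub_apply] at e1 e2
      rw [hq, e1, e2, integral_add i1 i2, ← hZ1, ← hZ2, setIntegral_const, volume_real_ball_euclidean d 0 hδ,
        setIntegral_ball_bilin d hδ, htr, smul_eq_mul]
    have hd : (d : ℝ) + 2 ≠ 0 := by positivity
    rw [hI]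
    field_simp
    ring
  have hcpos : 0 < c := by
    have : 0 < Real.Gamma (1 + (d : ℝ) / 2) := Real.Gamma_pos_of_pos (by positivity)
    positivity
  rw [isLittleO_iff] at hqo ⊢
  intro ε hε
  obtain ⟨r, hr, H⟩ := Metric.eventually_nhds_iff_ball.1 (hqo (c := ε / c) (by positivity))
  filter_upwards [Ioo_mem_nhdsGT hr] with δ hδ
  obtain ⟨hδ0, hδr⟩ := hδ
  have hbound := norm_setIntegral_le_of_norm_le_const (μ := volume) (f := q)
    (s := Metric.ball 0 δ) (C := ε / c * δ ^ 3) measure_ball_lt_top (fun h hh => by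
      have h1 := H h (Metric.ball_subset_ball hδr.le hh)
      have h2 : ‖h‖ ≤ δ := by simpa using (mem_ball_zero_iff.1 hh).le
      rw [norm_pow, norm_norm] at h1
      exact h1.trans (by gcongr))
  rw [volume_real_ball_euclidean d 0 hδ0, ← hc] at hbound
  have hsimp : ε / c * δ ^ 3 * (δ ^ d * c) = ε * δ ^ (d + 3) := by
    field_simp
    ring
  rw [hsimp] at hbound
  rw [key δ hδ0, norm_div, norm_pow, Real.norm_of_nonneg hδ0.le, Real.norm_two]
  have := norm_nonneg (∫ h in Metric.ball 0 δ, q h)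
  linarith
end

section
/- Let d ≥ 1, let B = {x ∈ ℝ^d : ∑_{j=1}^d x_j² ≤ 1} be the closed unit ball, and let a₁, …, a_d be nonnegative real numbers. Then ∫_B ∏_{j=1}^d |x_j|^{a_j} dx = ( ∏_{j=1}^d Γ((a_j + 1)/2) ) / Γ( 1 + d/2 + (1/2) ∑_{j=1}^d a_j ), where the integral is with respect to Lebesgue measure on ℝ^d and Γ is the Gamma function. -/
open MeasureTheory Real

/-!
The proof computes the Gaussian integral `∫ f(x) exp(-‖x‖²) dx` of `f(x) = ∏ |x_j|^{a_j}` in two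
ways. By Tonelli in the coordinates it is a product of one-dimensional integrals, equal to
`∏ Γ((a_j+1)/2)` (`integral_monomial_gaussian`). On the other hand
`exp(-‖x‖²) = ∫_{t ≥ ‖x‖²} exp(-t) dt`; exchanging the integrals leaves
`∫_{t > 0} exp(-t) (∫_{‖x‖ ≤ √t} f) dt`. Since `f` is homogeneous of degree `∑ a_j`, the inner
integral is `t^{(d + ∑ a_j)/2} ∫_B f` (`setIntegral_closedBall_sqrt`), and what remains is Euler's
integral for `Γ(1 + (d + ∑ a_j)/2)`.
-/

lemma integral_abs_rpow_gaussian {a : ℝ} (ha : 0 ≤ a) :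
    ∫ x : ℝ, |x| ^ a * exp (-x ^ 2) = Gamma ((a + 1) / 2) := by
  have h1 := integral_comp_abs (f := fun x : ℝ => x ^ a * exp (-x ^ 2))
  simp only [sq_abs] at h1
  have h2 := integral_rpow_mul_exp_neg_rpow (p := 2) (q := a) two_pos (by linarith)
  simp only [rpow_ofNat] at h2
  rw [h1, h2]
  ring

lemma integral_monomial_gaussian {d : ℕ} {a : Fin d → ℝ} (ha : ∀ j, 0 ≤ a j) :
    ∫ x : EuclideanSpace ℝ (Fin d), (∏ j, |x j| ^ a j) * exp (-‖x‖ ^ 2) =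
      ∏ j, Gamma ((a j + 1) / 2) := by
  rw [← (EuclideanSpace.volume_preserving_symm_measurableEquiv_toLp (Fin d)).symm.integral_comp'
    (fun x : EuclideanSpace ℝ (Fin d) => (∏ j, |x j| ^ a j) * exp (-‖x‖ ^ 2))]
  rw [← Finset.prod_congr rfl (fun j _ => integral_abs_rpow_gaussian (ha j)),
    ← integral_fintype_prod_volume_eq_prod (fun j (x : ℝ) => |x| ^ a j * exp (-x ^ 2))]
  congr 1 with x
  rw [Finset.prod_mul_distrib, ← exp_sum, Finset.sum_neg_distrib, EuclideanSpace.norm_sq_eq]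
  simp

/-- Homogeneity of the monomial, integrated over a ball. -/
lemma setIntegral_closedBall_sqrt {d : ℕ} (a : Fin d → ℝ) {t : ℝ} (ht : 0 < t) :
    ∫ x in Metric.closedBall (0 : EuclideanSpace ℝ (Fin d)) (√t), ∏ j, |x j| ^ a j =
      t ^ ((d : ℝ) / 2 + (∑ j, a j) / 2) *
        ∫ x in Metric.closedBall (0 : EuclideanSpace ℝ (Fin d)) 1, ∏ j, |x j| ^ a j := by
  have hs : 0 < √t := sqrt_pos.2 ht
  have h := Measure.setIntegral_comp_smul_of_pos volume
    (fun x : EuclideanSpace ℝ (Fin d) => ∏ j, |x j| ^ a j) (Metric.closedBall 0 1) hs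
  have hhom : ∀ x : EuclideanSpace ℝ (Fin d),
      ∏ j, |(√t • x) j| ^ a j = √t ^ (∑ j, a j) * ∏ j, |x j| ^ a j := by
    intro x
    rw [rpow_sum_of_pos hs, ← Finset.prod_mul_distrib]
    refine Finset.prod_congr rfl fun j _ => ?_
    rw [PiLp.smul_apply, smul_eq_mul, abs_mul, abs_of_pos hs, mul_rpow hs.le (abs_nonneg _)]
  simp only [hhom] at h
  rw [smul_unitClosedBall, norm_of_nonneg hs.le, integral_const_mul, smul_eq_mul,
    finrank_euclideanSpace_fin] at h
  rw [inv_mul_eq_div, eq_div_iff (by positivity)] at h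
  rw [← h, rpow_add ht, sqrt_eq_rpow, ← rpow_mul ht.le, ← rpow_natCast, ← rpow_mul ht.le]
  ring_nf

/-- For `d ≥ 1` and nonnegative real exponents `a₁, …, a_d`, the integral
of `∏_j |x_j|^{a_j}` over the closed unit ball of `ℝ^d` equals
`(∏_j Γ((a_j+1)/2)) / Γ(1 + d/2 + (∑_j a_j)/2)`. -/
theorem integral_abs_monomial_unitBall
    (d : ℕ) (hd : 1 ≤ d) (a : Fin d → ℝ) (ha : ∀ j, 0 ≤ a j) :
    ∫ x in Metric.closedBall (0 : EuclideanSpace ℝ (Fin d)) 1,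
        ∏ j : Fin d, |x j| ^ (a j) =
      (∏ j : Fin d, Real.Gamma ((a j + 1) / 2)) /
        Real.Gamma (1 + d / 2 + (∑ j : Fin d, a j) / 2) := by
  have hA : 0 ≤ ∑ j, a j := Finset.sum_nonneg fun j _ => ha j
  have hΓ : 0 < Gamma (1 + d / 2 + (∑ j, a j) / 2) := Gamma_pos_of_pos (by positivity)
  have hP : 0 < ∏ j, Gamma ((a j + 1) / 2) :=
    Finset.prod_pos fun j _ => Gamma_pos_of_pos (by have := ha j; positivity)
  rw [eq_div_iff hΓ.ne', ← integral_monomial_gaussian ha]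
  set f : EuclideanSpace ℝ (Fin d) → ℝ := fun x => ∏ j, |x j| ^ a j with hf
  have hf0 : ∀ x, 0 ≤ f x := fun x => Finset.prod_nonneg fun j _ => by positivity
  have hfm : Measurable f := by fun_prop
  -- A function with nonzero Bochner integral is integrable.
  have hint : Integrable (fun x => f x * exp (-‖x‖ ^ 2)) :=
    Integrable.of_integral_ne_zero (by rw [integral_monomial_gaussian ha]; exact hP.ne')
  let F : EuclideanSpace ℝ (Fin d) → ℝ → ℝ :=
    fun x t => f x * (Set.Ici (‖x‖ ^ 2)).indicator (fun t => exp (-t)) t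
  have hF0 : ∀ x t, 0 ≤ F x t := fun x t =>
    mul_nonneg (hf0 x) (Set.indicator_nonneg (fun _ _ => (exp_pos _).le) _)
  have hFx : ∀ x, ∫ t in Set.Ioi 0, F x t = f x * exp (-‖x‖ ^ 2) := by
    intro x
    rw [← integral_Ici_eq_integral_Ioi, integral_const_mul,
      setIntegral_indicator measurableSet_Ici, Set.inter_eq_right.2
        (Set.Ici_subset_Ici.2 (by positivity)), integral_Ici_eq_integral_Ioi,
      integral_exp_neg_Ioi]
  have hFm : Measurable (Function.uncurry F) := by
    have : Function.uncurry F = fun p => f p.1 *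
        {p : EuclideanSpace ℝ (Fin d) × ℝ | ‖p.1‖ ^ 2 ≤ p.2}.indicator
          (fun p => exp (-p.2)) p := rfl
    rw [this]
    exact (hfm.comp measurable_fst).mul
      (Measurable.indicator (by fun_prop) (measurableSet_le (by fun_prop) (by fun_prop)))
  have hFi : Integrable (Function.uncurry F) (volume.prod (volume.restrict (Set.Ioi 0))) := by
    rw [integrable_prod_iff hFm.aestronglyMeasurable]
    refine ⟨Filter.Eventually.of_forall fun x => ?_, ?_⟩
    · exact Integrable.const_mul (f := (Set.Ici (‖x‖ ^ 2)).indicator fun t => exp (-t))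
        ((integrableOn_exp_neg_Ioi 0).indicator measurableSet_Ici) (f x)
    · simp only [Function.uncurry_apply_pair, norm_of_nonneg (hF0 _ _), hFx]
      exact hint
  have hFt : ∀ t ∈ Set.Ioi (0 : ℝ), ∫ x, F x t =
      exp (-t) * t ^ ((d : ℝ) / 2 + (∑ j, a j) / 2) * ∫ x in Metric.closedBall 0 1, f x := by
    intro t ht
    rw [mul_assoc, ← setIntegral_closedBall_sqrt a ht, ← integral_const_mul,
      ← integral_indicator Metric.isClosed_closedBall.measurableSet]
    congr 1 with x
    have hx : x ∈ Metric.closedBall 0 (√t) ↔ t ∈ Set.Ici (‖x‖ ^ 2) := by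
      rw [mem_closedBall_zero_iff, Set.mem_Ici]
      exact ⟨fun h => (pow_le_pow_left₀ (norm_nonneg x) h 2).trans_eq (sq_sqrt (Set.mem_Ioi.1 ht).le),
        fun h => le_sqrt_of_sq_le h⟩
    by_cases h : t ∈ Set.Ici (‖x‖ ^ 2)
    · simp only [F, Set.indicator_of_mem h, Set.indicator_of_mem (hx.2 h), hf, mul_comm]
    · simp only [F, Set.indicator_of_notMem h, Set.indicator_of_notMem (mt hx.1 h), mul_zero]
  calc (∫ x in Metric.closedBall 0 1, f x) * Gamma (1 + d / 2 + (∑ j, a j) / 2)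
      = ∫ t in Set.Ioi 0, ∫ x, F x t := by
        rw [setIntegral_congr_fun measurableSet_Ioi hFt, integral_mul_const,
          Gamma_eq_integral (by positivity), mul_comm]
        ring_nf
    _ = ∫ x, ∫ t in Set.Ioi 0, F x t := (integral_integral_swap hFi).symm
    _ = _ := by simp only [hFx, hf]
end
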